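/- Let Y be a real Banach space and let A : ℓ¹ → Y be a bounded linear operator that is weak*-to-weak sequentially continuous. Fix y^δ ∈ Y, α > 0, and p > 1, and consider the Tikhonov functional T(x) = ‖A x − y^δ‖_Y^p + α·‖x‖_{ℓ¹} on ℓ¹. Then: (i) T attains its minimum, i.e., there exists x* ∈ ℓ¹ with T(x*) ≤ T(x) for all x ∈ ℓ¹; (ii) every minimizer of T is sparse, i.e., has only finitely many nonzero components; (iii) if the equation A x = y has at least one solution x ∈ ℓ¹ for a given y ∈ Y, then there exists a norm-minimizing solution: a solution x† with ‖x†‖_{ℓ¹} ≤ ‖x‖_{ℓ¹} for every solution x of A x = y. -/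

import Mathlib

open Filter

/-- A sequence in `ℓ¹` converges weak* (w.r.t. the predual `c₀`) to `x₀` if all dual pairings
with null sequences converge. -/
def WeakStarConvLp1 (x : ℕ → lp (fun _ : ℕ => ℝ) 1) (x₀ : lp (fun _ : ℕ => ℝ) 1) : Prop :=
  ∀ c : ℕ → ℝ, Tendsto c atTop (nhds 0) →
    Tendsto (fun n => ∑' k, c k * x n k) atTop (nhds (∑' k, c k * x₀ k))

/-- A bounded linear operator `A : ℓ¹ → Y` is weak*-to-weak sequentially continuous if it maps
weak*-convergent sequences to weakly convergent sequences. -/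
def WeakStarToWeakSeqContinuous {Y : Type*} [NormedAddCommGroup Y] [NormedSpace ℝ Y]
    (A : lp (fun _ : ℕ => ℝ) 1 →L[ℝ] Y) : Prop :=
  ∀ (x : ℕ → lp (fun _ : ℕ => ℝ) 1) (x₀ : lp (fun _ : ℕ => ℝ) 1), WeakStarConvLp1 x x₀ →
    ∀ f : Y →L[ℝ] ℝ, Tendsto (fun n => f (A (x n))) atTop (nhds (f (A x₀)))


lemma l1_hasSum (x : lp (fun _ : ℕ => ℝ) 1) : HasSum (fun k => |x k|) ‖x‖ := by
  have h := lp.hasSum_norm (p := 1) (by simp) x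
  simpa using h

lemma l1_weakStar_of_pointwise (x : ℕ → lp (fun _ : ℕ => ℝ) 1) (x₀ : lp (fun _ : ℕ => ℝ) 1)
    (C : ℝ) (hC : ∀ n, ‖x n‖ ≤ C) (hx : ∀ k, Tendsto (fun n => x n k) atTop (nhds (x₀ k))) :
    WeakStarConvLp1 x x₀ := by
  intro c hc
  obtain ⟨M, hM⟩ : ∃ M, ∀ k, |c k| ≤ M := by
    obtain ⟨M, hM⟩ := (hc.abs).bddAbove_range
    exact ⟨M, fun k => hM ⟨k, rfl⟩⟩
  have hsum : ∀ z : lp (fun _ : ℕ => ℝ) 1, Summable (fun k => |c k * z k|) := by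
    intro z
    refine Summable.of_nonneg_of_le (fun _ => abs_nonneg _) (fun k => ?_)
      ((l1_hasSum z).summable.mul_left M)
    rw [abs_mul]
    exact mul_le_mul_of_nonneg_right (hM k) (abs_nonneg _)
  have hC0 : 0 ≤ C := (norm_nonneg _).trans (hC 0)
  set K : ℝ := C + ‖x₀‖ + 1 with hK
  have hKpos : 0 < K := by positivity
  rw [Metric.tendsto_atTop']
  intro ε hε
  have hη : 0 < ε / (2 * K) := by positivity
  obtain ⟨N, hN⟩ := Metric.tendsto_atTop.1 hc _ hη
  have hfin : Tendsto (fun n => ∑ k ∈ Finset.range N, |c k * (x n k - x₀ k)|) atTop (nhds 0) := by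
    have : Tendsto (fun n => ∑ k ∈ Finset.range N, |c k * (x n k - x₀ k)|) atTop
        (nhds (∑ k ∈ Finset.range N, |c k * (x₀ k - x₀ k)|)) :=
      tendsto_finsetSum _ fun k _ => (((hx k).sub_const _).const_mul _).abs
    simpa using this
  obtain ⟨n₀, hn₀⟩ := Metric.tendsto_atTop.1 hfin (ε / 2) (by positivity)
  refine ⟨n₀, fun n hn => ?_⟩
  have h1 := hn₀ n hn.le
  have hz := hsum (x n - x₀)
  have heq : (∑' k, c k * x n k) - ∑' k, c k * x₀ k = ∑' k, c k * (x n - x₀) k := by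
    rw [← (hsum (x n)).of_abs.tsum_sub (hsum x₀).of_abs]
    congr 1
    ext k
    simp [mul_sub]
  rw [Real.dist_eq, heq]
  have h2 : |∑' k, c k * (x n - x₀) k| ≤ ∑' k, |c k * (x n - x₀) k| := by
    have := norm_tsum_le_tsum_norm (f := fun k => c k * (x n - x₀) k) (by simpa only [Real.norm_eq_abs] using hz)
    simpa only [Real.norm_eq_abs] using this
  have h3 := hz.sum_add_tsum_nat_add N
  have hs := l1_hasSum (x n - x₀)
  have h4 : ∑' k, |c (k + N) * (x n - x₀) (k + N)| ≤ ∑' k, ε / (2 * K) * |(x n - x₀) (k + N)| := by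
    refine Summable.tsum_le_tsum (fun k => ?_) ((summable_nat_add_iff N).2 hz)
      (((summable_nat_add_iff N).2 hs.summable).mul_left _)
    rw [abs_mul]
    refine mul_le_mul_of_nonneg_right ?_ (abs_nonneg _)
    have := hN (k + N) (by omega)
    rw [Real.dist_eq, sub_zero] at this
    exact this.le
  rw [tsum_mul_left] at h4
  have h5 : ∑' k, |(x n - x₀) (k + N)| ≤ ‖x n - x₀‖ := by
    rw [← hs.tsum_eq, ← hs.summable.sum_add_tsum_nat_add N]
    have : 0 ≤ ∑ k ∈ Finset.range N, |(x n - x₀) k| := Finset.sum_nonneg fun _ _ => abs_nonneg _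
    linarith
  have h6 : ‖x n - x₀‖ ≤ K := by
    have := norm_sub_le (x n) x₀
    have := hC n
    linarith
  have h7 : ε / (2 * K) * ∑' k, |(x n - x₀) (k + N)| ≤ ε / 2 := by
    calc _ ≤ ε / (2 * K) * K := mul_le_mul_of_nonneg_left (h5.trans h6) hη.le
      _ = ε / 2 := by field_simp
  have h8 : ∑ k ∈ Finset.range N, |c k * (x n - x₀) k| < ε / 2 := by
    rw [Real.dist_eq, sub_zero] at h1
    refine lt_of_le_of_lt (le_of_eq ?_) ((le_abs_self _).trans_lt h1)
    simp
  linarith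

lemma l1_key {Y : Type*} [NormedAddCommGroup Y] [NormedSpace ℝ Y]
    (A : lp (fun _ : ℕ => ℝ) 1 →L[ℝ] Y) (hw : WeakStarToWeakSeqContinuous A) (y : Y)
    (x : ℕ → lp (fun _ : ℕ => ℝ) 1) (C : ℝ) (hC : ∀ n, ‖x n‖ ≤ C) :
    ∃ (x₀ : lp (fun _ : ℕ => ℝ) 1) (φ : ℕ → ℕ) (a b : ℝ), StrictMono φ ∧
      Tendsto (fun n => ‖x (φ n)‖) atTop (nhds a) ∧
      Tendsto (fun n => ‖A (x (φ n)) - y‖) atTop (nhds b) ∧ ‖x₀‖ ≤ a ∧ ‖A x₀ - y‖ ≤ b := by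
  have hcpt : IsCompact ((Set.Icc (0:ℝ) C ×ˢ Set.Icc (0:ℝ) (‖A‖ * C + ‖y‖)) ×ˢ
      (Set.pi Set.univ (fun _ : ℕ => Set.Icc (-C) C))) :=
    (isCompact_Icc.prod isCompact_Icc).prod (isCompact_univ_pi fun _ => isCompact_Icc)
  obtain ⟨⟨⟨a, b⟩, u⟩, -, φ, hφ, hlim⟩ := hcpt.tendsto_subseq
    (x := fun n => ((‖x n‖, ‖A (x n) - y‖), fun k => x n k)) (by
      intro n
      refine ⟨⟨⟨norm_nonneg _, hC n⟩, norm_nonneg _, ?_⟩, fun k _ => ?_⟩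
      · refine (norm_sub_le _ _).trans ?_
        have := A.le_of_opNorm_le_of_le le_rfl (hC n)
        simpa using this
      · have := lp.norm_apply_le_norm one_ne_zero (x n) k
        exact abs_le.1 (this.trans (hC n)))
  have ha : Tendsto (fun n => ‖x (φ n)‖) atTop (nhds a) :=
    ((continuous_fst.comp continuous_fst).tendsto _).comp hlim
  have hb : Tendsto (fun n => ‖A (x (φ n)) - y‖) atTop (nhds b) :=
    ((continuous_snd.comp continuous_fst).tendsto _).comp hlim
  have hu : Tendsto (fun n => (fun k => x (φ n) k)) atTop (nhds u) :=
    (continuous_snd.tendsto _).comp hlim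
  have hmem : Memℓp u 1 := by
    refine lp.memℓp_of_tendsto (F := fun n => x (φ n)) (l := atTop) ?_ hu
    rw [isBounded_iff_forall_norm_le]
    exact ⟨C, by rintro _ ⟨n, rfl⟩; exact hC _⟩
  let x₀ : lp (fun _ : ℕ => ℝ) 1 := ⟨u, hmem⟩
  have hpt : ∀ k, Tendsto (fun n => x (φ n) k) atTop (nhds (x₀ k)) := fun k =>
    (tendsto_pi_nhds.1 hu) k
  have hws := l1_weakStar_of_pointwise (fun n => x (φ n)) x₀ C (fun n => hC _) hpt
  refine ⟨x₀, φ, a, b, hφ, ha, hb, ?_, ?_⟩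
  · refine le_of_forall_pos_le_add fun ε hε => ?_
    have : ∀ᶠ n in atTop, ‖x (φ n)‖ ≤ a + ε :=
      (ha.eventually (gt_mem_nhds (show a < a + ε by linarith))).mono fun _ h => le_of_lt h
    exact lp.norm_le_of_tendsto (F := fun n => x (φ n)) this hu
  · obtain ⟨f, hf, hfv⟩ := exists_dual_vector'' ℝ (A x₀ - y)
    have h1 : Tendsto (fun n => f (A (x (φ n)) - y)) atTop (nhds (f (A x₀ - y))) := by
      simp only [map_sub]
      exact (hw _ _ hws f).sub_const _
    rw [hfv] at h1
    refine le_of_tendsto_of_tendsto' h1 hb fun n => ?_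
    have := f.le_of_opNorm_le hf (A (x (φ n)) - y)
    rw [one_mul] at this
    exact (le_abs_self _).trans this

lemma l1_single_null {Y : Type*} [NormedAddCommGroup Y] [NormedSpace ℝ Y]
    (A : lp (fun _ : ℕ => ℝ) 1 →L[ℝ] Y) (hw : WeakStarToWeakSeqContinuous A) (f : Y →L[ℝ] ℝ) :
    Tendsto (fun k => f (A (lp.single 1 k (1:ℝ)))) atTop (nhds 0) := by
  have := hw (fun k => lp.single 1 k (1:ℝ)) 0 (by
    intro c hc
    have h : ∀ n, ∑' k, c k * (lp.single 1 n (1:ℝ) : lp (fun _ : ℕ => ℝ) 1) k = c n := by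
      intro n
      rw [tsum_eq_single n]
      · simp
      · intro k hk
        rw [lp.single_apply_ne _ _ _ hk, mul_zero]
    simp only [h]
    simpa using hc) f
  simpa using this

/-- For a weak*-to-weak sequentially continuous bounded linear operator
`A : ℓ¹ → Y`, `y^δ ∈ Y`, `α > 0` and `p > 1`, the Tikhonov functional
`T(x) = ‖A x − y^δ‖^p + α‖x‖₁` attains its minimum, every minimizer is sparse, and whenever
`A x = y` is solvable it possesses a norm-minimizing solution. -/
theorem tikhonov_existence_sparsity_normMinimizingSolutions
    {Y : Type*} [NormedAddCommGroup Y] [NormedSpace ℝ Y] [CompleteSpace Y]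
    (A : lp (fun _ : ℕ => ℝ) 1 →L[ℝ] Y) (hw : WeakStarToWeakSeqContinuous A)
    (ydelta : Y) (α : ℝ) (hα : 0 < α) (p : ℝ) (hp : 1 < p)
    (T : lp (fun _ : ℕ => ℝ) 1 → ℝ)
    (hT : ∀ x, T x = ‖A x - ydelta‖ ^ p + α * ‖x‖) :
    (∃ xstar : lp (fun _ : ℕ => ℝ) 1, ∀ x, T xstar ≤ T x) ∧
    (∀ xstar : lp (fun _ : ℕ => ℝ) 1, (∀ x, T xstar ≤ T x) →
      {k : ℕ | xstar k ≠ 0}.Finite) ∧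
    (∀ y : Y, (∃ x : lp (fun _ : ℕ => ℝ) 1, A x = y) →
      ∃ xdag : lp (fun _ : ℕ => ℝ) 1, A xdag = y ∧
        ∀ x : lp (fun _ : ℕ => ℝ) 1, A x = y → ‖xdag‖ ≤ ‖x‖) := by
  refine ⟨?_, ?_, ?_⟩
  · have hT0 : ∀ x, 0 ≤ T x := fun x => by rw [hT]; positivity
    have hbdd : BddBelow (Set.range T) := ⟨0, by rintro _ ⟨x, rfl⟩; exact hT0 x⟩
    obtain ⟨t, -, ht, htm⟩ := exists_seq_tendsto_sInf (Set.range_nonempty T) hbdd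
    choose x hx using htm
    obtain ⟨M, hM⟩ := ht.bddAbove_range
    have hC : ∀ n, ‖x n‖ ≤ M / α := by
      intro n
      rw [le_div_iff₀ hα]
      have h1 : t n ≤ M := hM ⟨n, rfl⟩
      rw [← hx n, hT] at h1
      have : 0 ≤ ‖A (x n) - ydelta‖ ^ p := by positivity
      linarith
    obtain ⟨x₀, φ, a, b, hφ, ha, hb, hxa, hxb⟩ := l1_key A hw ydelta x _ hC
    refine ⟨x₀, fun z => ?_⟩
    have hlim : Tendsto (fun n => T (x (φ n))) atTop (nhds (b ^ p + α * a)) := by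
      simp only [hT]
      exact (hb.rpow_const (Or.inr (by linarith))).add (ha.const_mul α)
    have hlim2 : Tendsto (fun n => T (x (φ n))) atTop (nhds (sInf (Set.range T))) := by
      simp only [hx]
      exact ht.comp hφ.tendsto_atTop
    have heq := tendsto_nhds_unique hlim hlim2
    calc T x₀ = ‖A x₀ - ydelta‖ ^ p + α * ‖x₀‖ := hT _
      _ ≤ b ^ p + α * a := by gcongr
      _ = sInf (Set.range T) := heq
      _ ≤ T z := csInf_le hbdd ⟨z, rfl⟩
  · intro xs hmin
    let U : Set (Y × ℝ) := {q | ‖q.1‖ ^ p + q.2 < T xs}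
    let D : Set (Y × ℝ) := {q | ∃ x : lp (fun _ : ℕ => ℝ) 1, q.1 = A x - ydelta ∧ α * ‖x‖ ≤ q.2}
    have hUo : IsOpen U := by
      refine isOpen_lt ?_ continuous_const
      exact (continuous_fst.norm.rpow_const (fun _ => Or.inr (by linarith))).add continuous_snd
    have hUc : Convex ℝ U := by
      have h1 : ConvexOn ℝ Set.univ (fun q : Y × ℝ => ‖q.1‖ ^ p + q.2) := by
        refine ⟨convex_univ, ?_⟩
        rintro ⟨u, s⟩ - ⟨v, r⟩ - a b ha hb hab
        have hc := (convexOn_rpow hp.le).2 (x := ‖u‖) (norm_nonneg u) (y := ‖v‖) (norm_nonneg v) ha hb hab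
        have hn : ‖a • u + b • v‖ ≤ a * ‖u‖ + b * ‖v‖ := by
          refine (norm_add_le _ _).trans ?_
          rw [norm_smul, norm_smul, Real.norm_of_nonneg ha, Real.norm_of_nonneg hb]
        have hn2 : ‖a • u + b • v‖ ^ p ≤ (a * ‖u‖ + b * ‖v‖) ^ p := by gcongr
        simp only [smul_eq_mul] at hc
        simp only [Prod.smul_mk, Prod.mk_add_mk, smul_eq_mul]
        linarith
      simpa [U] using h1.convex_lt (T xs)
    have hDc : Convex ℝ D := by
      rintro ⟨u, s⟩ ⟨x, hx1, hx2⟩ ⟨v, r⟩ ⟨z, hz1, hz2⟩ a b ha hb hab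
      refine ⟨a • x + b • z, ?_, ?_⟩
      · simp only [Prod.smul_mk, Prod.mk_add_mk, map_add, map_smul] at *
        rw [hx1, hz1]
        have : ydelta = a • ydelta + b • ydelta := by rw [← add_smul, hab, one_smul]
        rw [smul_sub, smul_sub]
        nth_rewrite 3 [this]
        abel
      · simp only [Prod.smul_mk, Prod.mk_add_mk, smul_eq_mul] at *
        have hn : ‖a • x + b • z‖ ≤ a * ‖x‖ + b * ‖z‖ := by
          refine (norm_add_le _ _).trans ?_
          rw [norm_smul, norm_smul, Real.norm_of_nonneg ha, Real.norm_of_nonneg hb]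
        have h1 := mul_le_mul_of_nonneg_left hn hα.le
        have h2 := mul_le_mul_of_nonneg_left hx2 ha
        have h3 := mul_le_mul_of_nonneg_left hz2 hb
        linarith
    have hdisj : Disjoint U D := by
      rw [Set.disjoint_left]
      rintro ⟨u, s⟩ hU ⟨x, hx1, hx2⟩
      simp only at hx1 hx2
      have hU' : ‖u‖ ^ p + s < T xs := hU
      have := hmin x
      rw [hT x, ← hx1] at this
      linarith
    obtain ⟨f, c, hfU, hfD⟩ := geometric_hahn_banach_open hUc hUo hDc hdisj
    let ξ : Y →L[ℝ] ℝ := f.comp (ContinuousLinearMap.inl ℝ Y ℝ)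
    let τ : ℝ := f (0, 1)
    have hf : ∀ u s, f (u, s) = ξ u + s * τ := by
      intro u s
      have : ((u, s) : Y × ℝ) = (u, 0) + s • ((0, 1) : Y × ℝ) := by simp
      rw [this, map_add, map_smul]
      simp [ξ, τ]
    have hlow : ∀ ε : ℝ, 0 < ε → ξ (A xs - ydelta) + (α * ‖xs‖ - ε) * τ < c := by
      intro ε hε
      rw [← hf]
      refine hfU _ ?_
      change ‖A xs - ydelta‖ ^ p + (α * ‖xs‖ - ε) < T xs
      rw [hT]
      linarith
    have hhigh : ∀ x : lp (fun _ : ℕ => ℝ) 1, c ≤ ξ (A x - ydelta) + (α * ‖x‖) * τ := by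
      intro x
      rw [← hf]
      exact hfD _ ⟨x, rfl, le_rfl⟩
    have hτ : 0 < τ := by
      have h1 := hlow 1 one_pos
      have h2 := hhigh xs
      linarith
    have hle : ξ (A xs - ydelta) + (α * ‖xs‖) * τ ≤ c := by
      refine le_of_forall_pos_le_add fun ε hε => ?_
      have h1 := hlow (ε / τ) (by positivity)
      have h2 : (α * ‖xs‖ - ε / τ) * τ = (α * ‖xs‖) * τ - ε := by field_simp
      linarith
    have hnull := l1_single_null A hw ξ
    obtain ⟨N, hN⟩ := Metric.tendsto_atTop.1 hnull (α * τ) (by positivity)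
    refine (Set.finite_lt_nat N).subset fun k hk => ?_
    by_contra hkN
    have hkN' : N ≤ k := not_lt.1 hkN
    have h1 := hN k hkN'
    rw [Real.dist_eq, sub_zero] at h1
    have hk' : 0 < |xs k| := abs_pos.2 hk
    have h2 := hhigh (xs - lp.single 1 k (xs k))
    have h3 : ‖xs - lp.single 1 k (xs k)‖ = ‖xs‖ - |xs k| := by
      have := lp.norm_compl_sum_single (p := 1) (by simp) xs {k}
      simpa using this
    have h4 : (lp.single 1 k (xs k) : lp (fun _ : ℕ => ℝ) 1) = xs k • lp.single 1 k (1:ℝ) := by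
      rw [← lp.single_smul]; simp
    rw [h3, h4] at h2
    simp only [map_sub, map_smul, smul_eq_mul] at h2 hle
    have h5 : -(xs k * ξ (A (lp.single 1 k (1:ℝ)))) ≤ |xs k| * |ξ (A (lp.single 1 k (1:ℝ)))| := by
      rw [← abs_mul]; exact neg_le_abs _
    have h6 := mul_lt_mul_of_pos_left h1 hk'
    nlinarith
  · rintro y ⟨z, hz⟩
    let S : Set ℝ := {r | ∃ x : lp (fun _ : ℕ => ℝ) 1, A x = y ∧ ‖x‖ = r}
    have hbdd : BddBelow S := ⟨0, by rintro _ ⟨x, -, rfl⟩; exact norm_nonneg x⟩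
    obtain ⟨t, -, ht, htm⟩ := exists_seq_tendsto_sInf (S := S) ⟨_, z, hz, rfl⟩ hbdd
    choose x hxy hx using htm
    obtain ⟨M, hM⟩ := ht.bddAbove_range
    have hC : ∀ n, ‖x n‖ ≤ M := fun n => by rw [hx]; exact hM ⟨n, rfl⟩
    obtain ⟨x₀, φ, a, b, hφ, ha, hb, hxa, hxb⟩ := l1_key A hw y x _ hC
    simp only [hxy, sub_self, norm_zero] at hb
    have hb0 : b = 0 := tendsto_nhds_unique hb tendsto_const_nhds
    have ha0 : a = sInf S := by
      refine tendsto_nhds_unique ha ?_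
      simp only [hx]
      exact ht.comp hφ.tendsto_atTop
    refine ⟨x₀, ?_, fun w hw' => ?_⟩
    · rw [hb0] at hxb
      exact sub_eq_zero.1 (norm_le_zero_iff.1 hxb)
    · rw [ha0] at hxa
      exact hxa.trans (csInf_le hbdd ⟨w, hw', rfl⟩)
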